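/- Let n ≥ 1 and let Φₙ ∈ ℤ[x] be the n-th cyclotomic polynomial, evaluated on quaternions. Then its quaternionic Mahler measure is: m_ℍ(Φₙ) = (1/4)·möb(n) if n is odd; m_ℍ(Φₙ) = (1/4)·möb(n/2) if n ≡ 2 (mod 4); and m_ℍ(Φₙ) = (1/2)·möb(n/2) if 4 | n, where möb denotes the Möbius function. -/

import Mathlib

open MeasureTheory Quaternion

noncomputable instance : MeasurableSpace (Quaternion ℝ) := borel _
instance : BorelSpace (Quaternion ℝ) := ⟨rfl⟩
instance : Nonempty (Metric.sphere (0 : Quaternion ℝ) 1) := ⟨⟨1, by simp⟩⟩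

/-- The probability Haar measure `μ` on the group `T¹(ℍ)` of unit quaternions
(the Haar measure normalized so that the whole group has measure `1`). -/
noncomputable def muH : Measure (Metric.sphere (0 : Quaternion ℝ) 1) :=
  Measure.haarMeasure ⊤

/-- The quaternionic Mahler measure `m_ℍ(f) = ∫_{T¹(ℍ)} log |f(q)| dμ(q)`. -/
noncomputable def mahlerH (f : Quaternion ℝ → Quaternion ℝ) : ℝ :=
  ∫ q : Metric.sphere (0 : Quaternion ℝ) 1, Real.log ‖f q‖ ∂muH

/-!
The norm `‖p(q)‖` of a real polynomial at a unit quaternion depends only on `Re q`, that is on the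
conjugacy class of `q`. Weyl's integration formula therefore turns the quaternionic Mahler measure
into an integral over the unit circle of `ℂ`, `m_ℍ(p) = (1 / π) ∫ log |p(e^{iθ})| sin² θ dθ`. Weyl's
formula itself holds because both sides have the same moments: left invariance makes
`∫ Re(r q)^k dμ(q)` proportional to `‖r‖^k`, and comparing the coefficients of `t²` for
`r = 1 + t u` gives a two-step recursion in `k`.

Since `2 sin² θ = 1 - cos 2θ`, only the zeroth and second Fourier coefficients of
`log |e^{iθ} - ζ|` enter; for `|ζ| = 1` they are `0` and `-ζ² / 4`. Hence `m_ℍ(p)` is a quarter of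
the sum of the squares of the roots when these all lie on the unit circle, and for `Φₙ` that sum is
Ramanujan's sum `c_n(2)`.
-/

section RamanujanSum

open ArithmeticFunction Polynomial

variable {R : Type*} [CommRing R] [IsDomain R] {n : ℕ} {ω : R}

theorem sum_nthRootsFinset_pow (hω : IsPrimitiveRoot ω n) (k : ℕ) :
    ∑ ζ ∈ nthRootsFinset n (1 : R), ζ ^ k = if n ∣ k then (n : R) else 0 := by
  classical
  have hsum : ∑ ζ ∈ nthRootsFinset n (1 : R), ζ ^ k = ∑ i ∈ Finset.range n, (ω ^ k) ^ i := by
    rw [nthRootsFinset_def, Finset.sum, Multiset.toFinset_val, hω.nthRoots_one_nodup.dedup,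
      hω.nthRoots_eq (one_pow n), Multiset.map_map]
    simp only [Function.comp_def, mul_one, ← pow_mul, mul_comm k]
    rfl
  rw [hsum]
  split_ifs with hk
  · simp [(hω.pow_eq_one_iff_dvd k).2 hk]
  · refine eq_zero_of_ne_zero_of_mul_left_eq_zero
      (sub_ne_zero.2 fun h => hk ((hω.pow_eq_one_iff_dvd k).1 h.symm)) ?_
    rw [mul_neg_geom_sum, ← pow_mul, mul_comm, pow_mul, hω.pow_eq_one, one_pow, sub_self]

/-- Ramanujan's sum `c_n(k)`. -/
theorem sum_primitiveRoots_pow (hω : IsPrimitiveRoot ω n) (k : ℕ) :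
    ∑ ζ ∈ primitiveRoots n R, ζ ^ k = ∑ d ∈ (n.gcd k).divisors, (moebius (n / d) : R) * d := by
  classical
  rcases n.eq_zero_or_pos with rfl | hn
  · simp
  have hdiv : ∀ m > 0, m ∣ n →
      ∑ i ∈ m.divisors, ∑ ζ ∈ primitiveRoots i R, ζ ^ k = if m ∣ k then (m : R) else 0 := by
    intro m _ hm
    rw [← sum_nthRootsFinset_pow (hω.pow hn (Nat.div_mul_cancel hm).symm),
      IsPrimitiveRoot.nthRoots_one_eq_biUnion_primitiveRoots,
      Finset.sum_biUnion fun _ _ _ _ h => IsPrimitiveRoot.disjoint h]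
  have hinv := (sum_eq_iff_sum_mul_moebius_eq_on {m | m ∣ n} fun _ _ => dvd_trans).1 hdiv n hn
    dvd_rfl
  rw [← hinv, Nat.sum_divisorsAntidiagonal'
    fun i j => (moebius i : R) * if j ∣ k then (j : R) else 0]
  simp only [mul_ite, mul_zero, ← Finset.sum_filter]
  congr 1
  ext d
  simp [Nat.dvd_gcd_iff, hn.ne']

theorem moebius_two_mul (m : ℕ) : moebius (2 * m) = if Odd m then -moebius m else 0 := by
  split_ifs with hm
  · rw [isMultiplicative_moebius.map_mul_of_coprime (Nat.coprime_two_left.2 hm),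
      moebius_apply_prime Nat.prime_two, neg_one_mul]
  · refine moebius_eq_zero_of_not_squarefree fun h => ?_
    obtain ⟨j, rfl⟩ := even_iff_two_dvd.1 (Nat.not_odd_iff_even.1 hm)
    exact Nat.prime_two.not_isUnit (h 2 ⟨j, by ring⟩)

theorem sum_primitiveRoots_sq_of_odd (hω : IsPrimitiveRoot ω n) (hn : Odd n) :
    ∑ ζ ∈ primitiveRoots n R, ζ ^ 2 = moebius n := by
  rw [sum_primitiveRoots_pow hω, Nat.coprime_two_right.2 hn]
  simp

theorem sum_primitiveRoots_sq_two_mul {m : ℕ} (hω : IsPrimitiveRoot ω (2 * m)) :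
    ∑ ζ ∈ primitiveRoots (2 * m) R, ζ ^ 2 =
      if Odd m then (moebius m : R) else 2 * moebius m := by
  rw [sum_primitiveRoots_pow hω, Nat.gcd_mul_right_left, Nat.prime_two.sum_divisors,
    Nat.mul_div_cancel_left m two_pos, Nat.div_one, moebius_two_mul]
  split_ifs <;> push_cast <;> ring

end RamanujanSum

section WeylIntegration

open scoped BoundedContinuousFunction

theorem measure_eq_of_integral_pow_eq {E : Type*} [TopologicalSpace E] [PolishSpace E]
    [MeasurableSpace E] [BorelSpace E] {P Q : Measure E} [IsFiniteMeasure P] [IsFiniteMeasure Q]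
    (f : E →ᵇ ℝ) (hf : Function.Injective f)
    (h : ∀ k : ℕ, ∫ x, f x ^ k ∂P = ∫ x, f x ^ k ∂Q) : P = Q := by
  let A : StarSubalgebra ℝ (E →ᵇ ℝ) :=
    { (Polynomial.aeval (R := ℝ) f).range with
      star_mem' := fun {g} hg => (show star g = g by ext; simp) ▸ hg }
  refine ext_of_forall_mem_subalgebra_integral_eq_of_polish (𝕜 := ℝ) (A := A) ?_ ?_
  · intro x y hxy
    exact ⟨f, ⟨f.toContinuousMap, ⟨f, ⟨Polynomial.X, by simp⟩, rfl⟩, rfl⟩, hf.ne hxy⟩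
  · rintro _ ⟨p, rfl⟩
    have hsum (x : E) : Polynomial.aeval f p x = p.sum fun k a => a * f x ^ k := by
      rw [Polynomial.aeval_eq_sum_range, Polynomial.sum_over_range _ (by simp)]
      simp [BoundedContinuousFunction.coe_sum]
    have hint (P : Measure E) [IsFiniteMeasure P] (k : ℕ) :
        Integrable (fun x => p.coeff k * f x ^ k) P :=
      ((f ^ k).integrable P).const_mul _
    change ∫ x, Polynomial.aeval f p x ∂P = ∫ x, Polynomial.aeval f p x ∂Q
    simp only [hsum, Polynomial.sum]
    rw [integral_finsetSum _ fun k _ => hint P k, integral_finsetSum _ fun k _ => hint Q k]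
    simp only [integral_const_mul, h]

local notation "𝕊³" => Metric.sphere (0 : ℍ[ℝ]) 1

instance : IsProbabilityMeasure muH := ⟨Measure.haarMeasure_self⟩

instance : muH.IsMulLeftInvariant := inferInstanceAs (Measure.haarMeasure ⊤).IsMulLeftInvariant

theorem integrable_muH_of_continuous {φ : 𝕊³ → ℝ} (hφ : Continuous φ) : Integrable φ muH :=
  hφ.integrable_of_hasCompactSupport (.of_compactSpace φ)

theorem integral_muH_mul_re_pow (r : ℍ[ℝ]) (k : ℕ) :
    ∫ q : 𝕊³, (r * q).re ^ k ∂muH = ‖r‖ ^ k * ∫ q : 𝕊³, (q : ℍ[ℝ]).re ^ k ∂muH := by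
  rcases eq_or_ne r 0 with rfl | hr
  · rcases eq_or_ne k 0 with rfl | hk <;> simp [*]
  have hr' : ‖r‖ ≠ 0 := norm_ne_zero_iff.2 hr
  let u : 𝕊³ := ⟨‖r‖⁻¹ • r, by simp [norm_smul, hr']⟩
  have hru (q : 𝕊³) : (r * q).re = ‖r‖ * ((u * q : 𝕊³) : ℍ[ℝ]).re := by
    simp [u, hr']
  simp only [hru, mul_pow, integral_const_mul]
  rw [integral_mul_left_eq_self (μ := muH) fun q : 𝕊³ => (q : ℍ[ℝ]).re ^ k]

theorem integral_muH_re_pow_of_odd {k : ℕ} (hk : Odd k) : ∫ q : 𝕊³, (q : ℍ[ℝ]).re ^ k ∂muH = 0 := by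
  have h := integral_muH_mul_re_pow (-1) k
  simp only [neg_one_mul, Quaternion.re_neg, hk.neg_pow, integral_neg, norm_neg, norm_one,
    one_pow, one_mul] at h
  linarith

theorem norm_one_add_smul_sq {u : ℍ[ℝ]} (hu : ‖u‖ = 1) (hre : u.re = 0) (t : ℝ) :
    ‖1 + t • u‖ ^ 2 = 1 + t ^ 2 := by
  rw [norm_add_sq_real, Quaternion.inner_def, norm_smul, hu]
  simp [hre]

@[fun_prop]
theorem continuous_re_mul (u : ℍ[ℝ]) : Continuous fun q : 𝕊³ => (u * q).re :=
  Quaternion.continuous_re.comp (by fun_prop)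

@[fun_prop]
theorem continuous_re_coe : Continuous fun q : 𝕊³ => (q : ℍ[ℝ]).re := by
  simpa using continuous_re_mul 1

theorem sum_integral_muH_mul_re_pow (u : ℍ[ℝ]) (k : ℕ) (t : ℝ) :
    ∑ j ∈ Finset.range (k + 1),
        t ^ j * ((∫ q : 𝕊³, (q : ℍ[ℝ]).re ^ (k - j) * (u * q).re ^ j ∂muH) * k.choose j) =
      ‖1 + t • u‖ ^ k * ∫ q : 𝕊³, (q : ℍ[ℝ]).re ^ k ∂muH := by
  have hbinom (q : 𝕊³) : ((1 + t • u) * q).re ^ k = ∑ j ∈ Finset.range (k + 1),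
      t ^ j * ((q : ℍ[ℝ]).re ^ (k - j) * (u * q).re ^ j * k.choose j) := by
    rw [show ((1 + t • u) * q).re = t * (u * q).re + (q : ℍ[ℝ]).re by simp [add_mul, add_comm],
      add_pow]
    refine Finset.sum_congr rfl fun j _ => ?_
    ring
  rw [← integral_muH_mul_re_pow, funext hbinom, integral_finsetSum _ fun j _ =>
    integrable_muH_of_continuous (by fun_prop)]
  simp only [integral_const_mul, integral_mul_const]

open Polynomial in
theorem integral_muH_re_pow_mul_sq {u : ℍ[ℝ]} (hu : ‖u‖ = 1) (hre : u.re = 0) (m : ℕ) :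
    (2 * m + 1) * ∫ q : 𝕊³, (q : ℍ[ℝ]).re ^ (2 * m) * (u * q).re ^ 2 ∂muH =
      ∫ q : 𝕊³, (q : ℍ[ℝ]).re ^ (2 * m + 2) ∂muH := by
  let J (j : ℕ) : ℝ := ∫ q : 𝕊³, (q : ℍ[ℝ]).re ^ (2 * m + 2 - j) * (u * q).re ^ j ∂muH
  let M : ℝ := ∫ q : 𝕊³, (q : ℍ[ℝ]).re ^ (2 * m + 2) ∂muH
  have hpoly : ∑ j ∈ Finset.range (2 * m + 3), monomial j (J j * (2 * m + 2).choose j) =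
      expand ℝ 2 ((1 + X) ^ (m + 1)) * C M := by
    refine Polynomial.funext fun t => ?_
    have hnorm : ‖1 + t • u‖ ^ (2 * m + 2) = (1 + t ^ 2) ^ (m + 1) := by
      rw [← norm_one_add_smul_sq hu hre, ← pow_mul, mul_add_one]
    have h := sum_integral_muH_mul_re_pow u (2 * m + 2) t
    rw [hnorm] at h
    simpa [eval_finsetSum, mul_comm, J, M] using h
  have hcoeff : J 2 * (2 * m + 2).choose 2 = (m + 1) * M := by
    have h := congr_arg (coeff · (1 * 2)) hpoly
    simp only [coeff_mul_C, coeff_expand_mul two_pos, coeff_one_add_X_pow, finsetSum_coeff,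
      coeff_monomial] at h
    simpa using h
  rw [Nat.cast_choose_two] at hcoeff
  push_cast at hcoeff
  refine mul_left_cancel₀ (by positivity : (m + 1 : ℝ) ≠ 0) ?_
  change (m + 1) * ((2 * m + 1) * J 2) = (m + 1) * M
  linear_combination hcoeff

theorem exists_imaginary_units_sum_sq :
    ∃ u : Fin 3 → ℍ[ℝ], (∀ a, ‖u a‖ = 1) ∧ (∀ a, (u a).re = 0) ∧
      ∀ q : ℍ[ℝ], q.re ^ 2 + ∑ a, (u a * q).re ^ 2 = ‖q‖ ^ 2 := by
  let b : OrthonormalBasis (Fin 4) ℝ ℍ[ℝ] := .ofRepr linearIsometryEquivTuple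
  have hb : b 0 = 1 := by ext <;> simp [b]
  refine ⟨fun a => b a.succ, fun a => b.orthonormal.1 _, fun a => ?_, fun q => ?_⟩
  · have h : inner ℝ (b a.succ) (b 0) = 0 := b.orthonormal.2 a.succ_ne_zero
    simpa [hb, Quaternion.inner_def] using h
  · have h := b.sum_sq_inner_right (star q)
    simpa [Fin.sum_univ_succ (n := 3), hb, Quaternion.inner_def] using h

theorem integral_muH_re_pow_add_two (k : ℕ) :
    (k + 4) * ∫ q : 𝕊³, (q : ℍ[ℝ]).re ^ (k + 2) ∂muH =
      (k + 1) * ∫ q : 𝕊³, (q : ℍ[ℝ]).re ^ k ∂muH := by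
  rcases k.even_or_odd' with ⟨m, rfl | rfl⟩
  swap
  · rw [integral_muH_re_pow_of_odd ⟨m, rfl⟩, integral_muH_re_pow_of_odd ⟨m + 1, by ring⟩, mul_zero,
      mul_zero]
  obtain ⟨u, hu, hre, hsq⟩ := exists_imaginary_units_sum_sq
  have hsplit (q : 𝕊³) : (q : ℍ[ℝ]).re ^ (2 * m) = (q : ℍ[ℝ]).re ^ (2 * m + 2) +
      ∑ a, (q : ℍ[ℝ]).re ^ (2 * m) * (u a * q).re ^ 2 := by
    rw [← Finset.mul_sum, pow_add, ← mul_add, hsq, norm_eq_of_mem_sphere, one_pow, mul_one]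
  have hint : ∫ q : 𝕊³, (q : ℍ[ℝ]).re ^ (2 * m) ∂muH =
      ∫ q : 𝕊³, (q : ℍ[ℝ]).re ^ (2 * m + 2) ∂muH +
        ∑ a, ∫ q : 𝕊³, (q : ℍ[ℝ]).re ^ (2 * m) * (u a * q).re ^ 2 ∂muH := by
    rw [funext hsplit, integral_add, integral_finsetSum]
    all_goals intros; exact integrable_muH_of_continuous (by fun_prop)
  have hterm (a : Fin 3) := integral_muH_re_pow_mul_sq (hu a) (hre a) m
  push_cast
  rw [hint, mul_add, Finset.mul_sum, Finset.sum_congr rfl fun a _ => hterm a]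
  simp only [Finset.sum_const, Finset.card_univ, Fintype.card_fin, nsmul_eq_mul, Nat.cast_ofNat]
  ring

theorem integral_cos_pow_add_two (k : ℕ) :
    (k + 2) * ∫ θ in 0..2 * Real.pi, Real.cos θ ^ (k + 2) =
      (k + 1) * ∫ θ in 0..2 * Real.pi, Real.cos θ ^ k := by
  rw [integral_cos_pow, Real.sin_two_pi, Real.sin_zero]
  field_simp
  ring

theorem integral_cos_pow_mul_sin_sq (k : ℕ) :
    (k + 2) * ∫ θ in 0..2 * Real.pi, Real.cos θ ^ k * Real.sin θ ^ 2 =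
      ∫ θ in 0..2 * Real.pi, Real.cos θ ^ k := by
  have hsplit (θ : ℝ) :
      Real.cos θ ^ k * Real.sin θ ^ 2 = Real.cos θ ^ k - Real.cos θ ^ (k + 2) := by
    rw [Real.sin_sq]
    ring
  simp only [hsplit]
  rw [intervalIntegral.integral_sub (Continuous.intervalIntegrable (by fun_prop) _ _)
    (Continuous.intervalIntegrable (by fun_prop) _ _), mul_sub, integral_cos_pow_add_two]
  ring

theorem integral_cos_pow_mul_sin_sq_add_two (k : ℕ) :
    (k + 4) * ∫ θ in 0..2 * Real.pi, Real.cos θ ^ (k + 2) * Real.sin θ ^ 2 =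
      (k + 1) * ∫ θ in 0..2 * Real.pi, Real.cos θ ^ k * Real.sin θ ^ 2 := by
  have h := integral_cos_pow_mul_sin_sq (k + 2)
  push_cast at h
  refine mul_left_cancel₀ (by positivity : (k + 2 : ℝ) ≠ 0) ?_
  linear_combination (k + 2) * h - (k + 1) * integral_cos_pow_mul_sin_sq k +
    integral_cos_pow_add_two k

theorem integral_muH_re_pow (k : ℕ) :
    ∫ q : 𝕊³, (q : ℍ[ℝ]).re ^ k ∂muH =
      Real.pi⁻¹ * ∫ θ in 0..2 * Real.pi, Real.cos θ ^ k * Real.sin θ ^ 2 := by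
  induction k using Nat.twoStepInduction with
  | zero => simp [integral_sin_sq]
  | one =>
    have h : (1 + 2) * ∫ θ in 0..2 * Real.pi, Real.cos θ * Real.sin θ ^ 2 = 0 := by
      simpa using integral_cos_pow_mul_sin_sq 1
    rw [integral_muH_re_pow_of_odd odd_one]
    simpa [show (1 + 2 : ℝ) ≠ 0 by norm_num] using h
  | more k ih _ =>
    refine mul_left_cancel₀ (by positivity : (k + 4 : ℝ) ≠ 0) ?_
    rw [integral_muH_re_pow_add_two, ih, mul_left_comm, mul_left_comm _ Real.pi⁻¹,
      integral_cos_pow_mul_sin_sq_add_two]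

/-- The measure `π⁻¹ sin² θ dθ` on one period `(0, 2π]`: the density of the angle of a random
conjugacy class of unit quaternions, parametrized by `cos θ + i sin θ`. -/
noncomputable def weylMeasure : Measure ℝ :=
  (volume.restrict (Set.Ioc 0 (2 * Real.pi))).withDensity
    fun θ => ENNReal.ofReal (Real.pi⁻¹ * Real.sin θ ^ 2)

theorem integral_weylMeasure (g : ℝ → ℝ) :
    ∫ θ, g θ ∂weylMeasure = Real.pi⁻¹ * ∫ θ in 0..2 * Real.pi, g θ * Real.sin θ ^ 2 := by
  rw [weylMeasure, integral_withDensity_eq_integral_toReal_smul (by fun_prop) (by simp),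
    intervalIntegral.integral_of_le (by positivity), ← integral_const_mul]
  refine integral_congr_ae (.of_forall fun θ => ?_)
  simp only [smul_eq_mul]
  rw [ENNReal.toReal_ofReal (by positivity)]
  ring

instance : IsFiniteMeasure weylMeasure :=
  isFiniteMeasure_withDensity_ofReal (Continuous.integrableOn_Ioc (by fun_prop)).2

theorem abs_re_le_norm (q : ℍ[ℝ]) : |q.re| ≤ ‖q‖ := by
  simpa [Quaternion.inner_def] using abs_real_inner_le_norm q 1

/-- Weyl's integration formula for class functions on `SU(2) ≅ T¹(ℍ)`. -/
theorem integral_muH_comp_re {h : ℝ → ℝ} (hm : Measurable h) :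
    ∫ q : 𝕊³, h (q : ℍ[ℝ]).re ∂muH =
      2 * Real.circleAverage (fun z => h z.re * z.im ^ 2) 0 1 := by
  let re (q : 𝕊³) : Set.Icc (-1 : ℝ) 1 :=
    ⟨(q : ℍ[ℝ]).re, abs_le.1 ((abs_re_le_norm _).trans_eq (norm_eq_of_mem_sphere q))⟩
  let cos (θ : ℝ) : Set.Icc (-1 : ℝ) 1 := ⟨Real.cos θ, Real.cos_mem_Icc θ⟩
  have hre : Measurable re := (by fun_prop : Continuous re).measurable
  have hcos : Measurable cos := (by fun_prop : Continuous cos).measurable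
  let x : Set.Icc (-1 : ℝ) 1 →ᵇ ℝ := .mkOfCompact ⟨Subtype.val, continuous_subtype_val⟩
  have hlaw : muH.map re = weylMeasure.map cos := by
    refine measure_eq_of_integral_pow_eq x Subtype.val_injective fun k => ?_
    rw [integral_map hre.aemeasurable (by fun_prop), integral_map hcos.aemeasurable (by fun_prop),
      integral_weylMeasure]
    exact integral_muH_re_pow k
  have hm' : AEStronglyMeasurable (fun y : Set.Icc (-1 : ℝ) 1 => h y) (muH.map re) :=
    (hm.comp measurable_subtype_coe).aestronglyMeasurable
  calc ∫ q : 𝕊³, h (q : ℍ[ℝ]).re ∂muH = ∫ θ, h (Real.cos θ) ∂weylMeasure := by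
        rw [← integral_map hre.aemeasurable hm', hlaw, integral_map hcos.aemeasurable (hlaw ▸ hm')]
    _ = 2 * Real.circleAverage (fun z => h z.re * z.im ^ 2) 0 1 := by
        rw [integral_weylMeasure, Real.circleAverage_def]
        simp only [mul_inv_rev, circleMap_zero, Complex.ofReal_one, one_mul,
          Complex.exp_ofReal_mul_I_re, Complex.exp_ofReal_mul_I_im, smul_eq_mul]
        ring

end WeylIntegration

section Slice

open Polynomial

theorem sq_sub_two_re_mul_add_norm_sq (q : ℍ[ℝ]) :
    q ^ 2 - ((2 * q.re : ℝ) : ℍ[ℝ]) * q + ((‖q‖ ^ 2 : ℝ) : ℍ[ℝ]) = 0 := by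
  rw [← Quaternion.self_add_star', sq ‖q‖, ← normSq_eq_norm_mul_self, ← star_mul_self]
  noncomm_ring

theorem norm_smul_add_coe_sq (q : ℍ[ℝ]) (a b : ℝ) :
    ‖a • q + (b : ℍ[ℝ])‖ ^ 2 = a ^ 2 * ‖q‖ ^ 2 + 2 * a * b * q.re + b ^ 2 := by
  rw [norm_add_sq_real, Quaternion.inner_def, norm_smul, norm_coe, mul_pow, Real.norm_eq_abs,
    Real.norm_eq_abs, sq_abs, sq_abs]
  simp only [star_coe, Algebra.smul_mul_assoc, re_smul, re_mul, re_coe, imI_coe, imJ_coe, imK_coe,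
    mul_zero, sub_zero, smul_eq_mul]
  ring

theorem norm_aeval_congr {q r : ℍ[ℝ]} (hre : q.re = r.re) (hnorm : ‖q‖ = ‖r‖) (p : ℝ[X]) :
    ‖aeval q p‖ = ‖aeval r p‖ := by
  let χ : ℝ[X] := X ^ 2 - C (2 * q.re) * X + C (‖q‖ ^ 2)
  have hχ : χ.Monic := by unfold χ; monicity!
  have hq : aeval q χ = 0 := by
    simpa [χ] using sq_sub_two_re_mul_add_norm_sq q
  have hr : aeval r χ = 0 := by
    simpa [χ, hre, hnorm] using sq_sub_two_re_mul_add_norm_sq r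
  have hχ2 : χ.natDegree = 2 := by unfold χ; compute_degree!
  have hdeg : (p %ₘ χ).natDegree < 2 :=
    hχ2 ▸ natDegree_modByMonic_lt p hχ fun h => by simp [h] at hχ2
  obtain ⟨a, b, hab⟩ := exists_eq_X_add_C_of_natDegree_le_one (Nat.lt_succ_iff.1 hdeg)
  have haeval {s : ℍ[ℝ]} (hs : aeval s χ = 0) : aeval s p = a • s + (b : ℍ[ℝ]) := by
    rw [← aeval_modByMonic_eq_self_of_root hs, hab]
    simp [Algebra.smul_def]
  rw [haeval hq, haeval hr, ← sq_eq_sq₀ (norm_nonneg _) (norm_nonneg _), norm_smul_add_coe_sq,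
    norm_smul_add_coe_sq, hre, hnorm]

theorem norm_coeComplex (z : ℂ) : ‖(z : ℍ[ℝ])‖ = ‖z‖ := by
  rw [← sq_eq_sq₀ (norm_nonneg _) (norm_nonneg _), sq ‖(z : ℍ[ℝ])‖, ← normSq_eq_norm_mul_self,
    ← Complex.normSq_eq_norm_sq, normSq_def', Complex.normSq_apply]
  simp only [re_coeComplex, imI_coeComplex, imJ_coeComplex, imK_coeComplex]
  ring

theorem norm_aeval_eq_norm_aeval_complex {q : ℍ[ℝ]} {z : ℂ} (hre : q.re = z.re)
    (hnorm : ‖q‖ = ‖z‖) (p : ℝ[X]) : ‖aeval q p‖ = ‖aeval z p‖ := by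
  rw [norm_aeval_congr (r := z) hre (hnorm.trans (norm_coeComplex z).symm), ← coe_ofComplex,
    aeval_algHom_apply, coe_ofComplex, norm_coeComplex]

theorem mahlerH_aeval_eq_circleAverage (p : ℝ[X]) :
    mahlerH (fun q => aeval q p) =
      2 * Real.circleAverage (fun z => Real.log ‖aeval z p‖ * z.im ^ 2) 0 1 := by
  let lift (x : ℝ) : ℂ := ⟨x, √(1 - x ^ 2)⟩
  have hlift {x : ℝ} (hx : |x| ≤ 1) : ‖lift x‖ = 1 := by
    rw [← sq_eq_sq₀ (norm_nonneg _) zero_le_one, ← Complex.normSq_eq_norm_sq, Complex.normSq_apply,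
      Real.mul_self_sqrt (sub_nonneg.2 ((sq_le_one_iff_abs_le_one x).2 hx))]
    ring
  have hcont : Continuous lift :=
    Complex.equivRealProdCLM.symm.continuous.comp
      (by fun_prop : Continuous fun x : ℝ => (x, √(1 - x ^ 2)))
  let h (x : ℝ) : ℝ := Real.log ‖aeval (lift x) p‖
  have hm : Measurable h :=
    Real.measurable_log.comp ((p.continuous_aeval.comp hcont).norm.measurable)
  have hsphere (q : Metric.sphere (0 : ℍ[ℝ]) 1) :
      ‖aeval (q : ℍ[ℝ]) p‖ = ‖aeval (lift (q : ℍ[ℝ]).re) p‖ := by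
    have hq : ‖(q : ℍ[ℝ])‖ = 1 := norm_eq_of_mem_sphere q
    exact norm_aeval_eq_norm_aeval_complex rfl
      (hq.trans (hlift ((abs_re_le_norm q).trans_eq hq)).symm) p
  have hcircle {z : ℂ} (hz : ‖z‖ = 1) : ‖aeval (lift z.re) p‖ = ‖aeval z p‖ := by
    have hw : ‖lift z.re‖ = ‖z‖ := (hlift (hz ▸ Complex.abs_re_le_norm z)).trans hz.symm
    rw [← norm_aeval_eq_norm_aeval_complex (q := z) rfl (norm_coeComplex z),
      norm_aeval_eq_norm_aeval_complex (z := lift z.re) rfl ((norm_coeComplex z).trans hw.symm)]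
  calc mahlerH (fun q => aeval q p) =
        ∫ q : Metric.sphere (0 : ℍ[ℝ]) 1, h (q : ℍ[ℝ]).re ∂muH := by
        simp only [mahlerH, hsphere, h]
    _ = 2 * Real.circleAverage (fun z => h z.re * z.im ^ 2) 0 1 := integral_muH_comp_re hm
    _ = 2 * Real.circleAverage (fun z => Real.log ‖aeval z p‖ * z.im ^ 2) 0 1 := by
        congr 1
        refine Real.circleAverage_congr_sphere fun z hz => ?_
        simp only [h, hcircle (show ‖z‖ = 1 by simpa using hz)]

end Slice

section FourierCoefficient

theorem continuous_mul_log_norm : Continuous fun w : ℂ => w * Real.log ‖w‖ := by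
  refine continuous_iff_continuousAt.2 fun w => ?_
  rcases eq_or_ne w 0 with rfl | hw
  · rw [ContinuousAt, zero_mul, tendsto_zero_iff_norm_tendsto_zero]
    have h : Continuous fun w : ℂ => ‖‖w‖ * Real.log ‖w‖‖ :=
      (Real.continuous_mul_log.comp continuous_norm).norm
    simpa using h.tendsto 0
  · fun_prop (disch := simpa using hw)

variable {ζ : ℂ}

theorem hasDerivAt_log_norm_circleMap_sub (hζ : ‖ζ‖ = 1) {θ : ℝ} (hθ : circleMap 0 1 θ ≠ ζ) :
    HasDerivAt (fun θ => (Real.log ‖circleMap 0 1 θ - ζ‖ : ℂ))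
      (Complex.I * (circleMap 0 1 θ + ζ) / (2 * (circleMap 0 1 θ - ζ))) θ := by
  set z := circleMap 0 1 θ with hz
  have hz1 : ‖z‖ = 1 := by simp [hz]
  have hz0 : z ≠ 0 := norm_ne_zero_iff.1 (by simp [hz1])
  have hζ0 : ζ ≠ 0 := norm_ne_zero_iff.1 (by simp [hζ])
  have hsub : z - ζ ≠ 0 := sub_ne_zero.2 hθ
  have hlog := (((((hasDerivAt_circleMap 0 1 θ).sub_const ζ).norm_sq).log
    (by simpa using hsub)).ofReal_comp).div_const 2
  refine (hlog.congr_deriv ?_).congr_of_eventuallyEq (.of_forall fun t => ?_)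
  · have hinner : ((inner ℝ (z - ζ) (z * Complex.I) : ℝ) : ℂ) =
        ((z - ζ) * (z⁻¹ * -Complex.I) + (z⁻¹ - ζ⁻¹) * (z * Complex.I)) / 2 := by
      rw [Complex.inner, Complex.re_eq_add_conj, Complex.inv_eq_conj hz1, Complex.inv_eq_conj hζ]
      simp only [map_sub, map_mul, Complex.conj_I, RingHomCompTriple.comp_apply, RingHom.id_apply]
      ring
    have hnorm : ((‖z - ζ‖ ^ 2 : ℝ) : ℂ) = (z - ζ) * (z⁻¹ - ζ⁻¹) := by
      rw [Complex.inv_eq_conj hz1, Complex.inv_eq_conj hζ, ← map_sub, Complex.mul_conj',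
        Complex.ofReal_pow]
    have hsub' : ζ - z ≠ 0 := sub_ne_zero.2 hθ.symm
    rw [← hz, Complex.ofReal_div, Complex.ofReal_mul, hinner, hnorm, inv_sub_inv hz0 hζ0]
    push_cast
    field_simp
    ring
  · simp [Real.log_pow]

theorem hasDerivAt_mul_log_norm_circleMap_sub (hζ : ‖ζ‖ = 1) (k : ℕ) {θ : ℝ}
    (hθ : circleMap 0 1 θ ≠ ζ) :
    HasDerivAt
      (fun θ => (circleMap 0 1 θ ^ k - ζ ^ k) * (Real.log ‖circleMap 0 1 θ - ζ‖ : ℂ))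
      (Complex.I * (k * (Real.log ‖circleMap 0 1 θ - ζ‖ * circleMap 0 1 θ ^ k) +
        (circleMap 0 1 θ + ζ) / 2 *
          ∑ i ∈ Finset.range k, circleMap 0 1 θ ^ i * ζ ^ (k - 1 - i))) θ := by
  have h := (((hasDerivAt_circleMap 0 1 θ).fun_pow k).sub_const (ζ ^ k)).fun_mul
    (hasDerivAt_log_norm_circleMap_sub hζ hθ)
  refine h.congr_deriv ?_
  have hsub := sub_ne_zero.2 hθ
  rw [← (Commute.all _ _).mul_geom_sum₂]
  rcases k with - | k
  · simp
  · simp only [Nat.add_sub_cancel]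
    field_simp
    ring

theorem continuous_sub_pow_mul_log_norm (ζ : ℂ) (k : ℕ) :
    Continuous fun z : ℂ => (z ^ k - ζ ^ k) * (Real.log ‖z - ζ‖ : ℂ) := by
  have h (z : ℂ) : (z ^ k - ζ ^ k) * (Real.log ‖z - ζ‖ : ℂ) =
      (∑ i ∈ Finset.range k, z ^ i * ζ ^ (k - 1 - i)) * ((z - ζ) * Real.log ‖z - ζ‖) := by
    rw [← (Commute.all _ _).mul_geom_sum₂]
    ring
  simp only [h]
  exact .mul (by fun_prop) (continuous_mul_log_norm.comp (by fun_prop))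

theorem circleIntegrable_log_norm_sub_mul_pow (ζ : ℂ) (k : ℕ) :
    CircleIntegrable (fun z => (Real.log ‖z - ζ‖ : ℂ) * z ^ k) 0 1 := by
  have hlog : CircleIntegrable (fun z => Real.log ‖z - ζ‖) 0 1 :=
    circleIntegrable_log_norm_sub_const 1
  have hlog' : CircleIntegrable (fun z => (Real.log ‖z - ζ‖ : ℂ)) 0 1 :=
    intervalIntegrable_iff.2 (intervalIntegrable_iff.1 hlog).ofReal
  exact hlog'.mul_continuousOn (by fun_prop)

/-- The Fourier coefficients of `log ‖z - ζ‖` on the unit circle, by integrating by parts against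
`z ^ k - ζ ^ k`, whose zero at `ζ` absorbs the singularity of the logarithm. -/
theorem circleAverage_log_norm_sub_mul_pow (hζ : ‖ζ‖ = 1) {k : ℕ} (hk : k ≠ 0) :
    Real.circleAverage (fun z => (Real.log ‖z - ζ‖ : ℂ) * z ^ k) 0 1 = -ζ ^ k / (2 * k) := by
  let L (z : ℂ) : ℂ := Real.log ‖z - ζ‖ * z ^ k
  let P (z : ℂ) : ℂ := (z + ζ) / 2 * ∑ i ∈ Finset.range k, z ^ i * ζ ^ (k - 1 - i)
  have hL : CircleIntegrable (fun z => (k : ℂ) • L z) 0 1 :=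
    (circleIntegrable_log_norm_sub_mul_pow ζ k).const_smul
  have hP : CircleIntegrable P 0 1 := ContinuousOn.circleIntegrable zero_le_one (by fun_prop)
  have hsum : Real.circleAverage (fun z => (k : ℂ) • L z + P z) 0 1 = 0 := by
    have hftc := integral_eq_of_hasDerivAt_off_countable_of_le
      (fun θ => (circleMap 0 1 θ ^ k - ζ ^ k) * (Real.log ‖circleMap 0 1 θ - ζ‖ : ℂ)) _
      Real.two_pi_pos.le ((Set.countable_singleton ζ).preimage_circleMap 0 one_ne_zero)
      ((continuous_sub_pow_mul_log_norm ζ k).comp (continuous_circleMap 0 1)).continuousOn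
      (fun θ hθ => hasDerivAt_mul_log_norm_circleMap_sub hζ k hθ.2)
      ((hL.add hP).const_mul Complex.I)
    rw [intervalIntegral.integral_const_mul, (periodic_circleMap 0 1).eq, sub_self] at hftc
    rw [Real.circleAverage]
    exact smul_eq_zero_of_right _ ((mul_eq_zero_iff_left Complex.I_ne_zero).1 hftc)
  have hPval : Real.circleAverage P 0 1 = ζ ^ k / 2 := by
    have hdiff : Differentiable ℂ P := by fun_prop
    rw [hdiff.diffContOnCl.circleAverage]
    obtain ⟨k, rfl⟩ := Nat.exists_eq_add_one_of_ne_zero hk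
    simp only [P, Finset.sum_range_succ', add_tsub_cancel_right, pow_succ, pow_zero, tsub_zero,
      one_mul, mul_zero, zero_mul, Finset.sum_const_zero, zero_add]
    ring
  rw [Real.circleAverage_fun_add hL hP, Real.circleAverage_fun_smul, hPval, smul_eq_mul] at hsum
  change Real.circleAverage L 0 1 = _
  field_simp
  linear_combination 2 * hsum

theorem circleAverage_log_norm_sub_mul_im_sq (hζ : ‖ζ‖ = 1) :
    Real.circleAverage (fun z => Real.log ‖z - ζ‖ * z.im ^ 2) 0 1 = (ζ ^ 2).re / 8 := by
  have hlog : CircleIntegrable (fun z => Real.log ‖z - ζ‖) 0 1 :=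
    circleIntegrable_log_norm_sub_const 1
  have hsq := circleIntegrable_log_norm_sub_mul_pow ζ 2
  have hre : CircleIntegrable (fun z => ((Real.log ‖z - ζ‖ : ℂ) * z ^ 2).re) 0 1 :=
    ⟨hsq.1.re, hsq.2.re⟩
  have havg : Real.circleAverage (fun z => ((Real.log ‖z - ζ‖ : ℂ) * z ^ 2).re) 0 1 =
      -(ζ ^ 2).re / 4 := by
    have h := Complex.reCLM.circleAverage_comp_comm hsq
    rw [circleAverage_log_norm_sub_mul_pow hζ two_ne_zero] at h
    refine h.trans ?_
    rw [Complex.reCLM_apply, show (2 * (2 : ℕ) : ℂ) = (4 : ℕ) by norm_num, Complex.div_natCast_re,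
      Complex.neg_re, Nat.cast_ofNat]
  calc Real.circleAverage (fun z => Real.log ‖z - ζ‖ * z.im ^ 2) 0 1
      = Real.circleAverage (fun z => (1 / 2 : ℝ) •
          (Real.log ‖z - ζ‖ - ((Real.log ‖z - ζ‖ : ℂ) * z ^ 2).re)) 0 1 := by
        refine Real.circleAverage_congr_sphere fun z hz => ?_
        have hz1 : z.re * z.re + z.im * z.im = 1 := by
          rw [← Complex.normSq_apply, Complex.normSq_eq_norm_sq, show ‖z‖ = 1 by simpa using hz,
            one_pow]
        rw [Complex.re_ofReal_mul, sq z, Complex.mul_re, smul_eq_mul]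
        linear_combination (Real.log ‖z - ζ‖ / 2) * hz1
    _ = (ζ ^ 2).re / 8 := by
        rw [Real.circleAverage_fun_smul, Real.circleAverage_fun_sub hlog hre,
          circleAverage_log_norm_sub_const₁ hζ, havg, smul_eq_mul]
        ring

end FourierCoefficient

section RootsOnUnitCircle

open Polynomial

theorem log_norm_eval_of_not_mem_roots {p : ℂ[X]} (hp : p.Monic) {z : ℂ} (hz : z ∉ p.roots) :
    Real.log ‖p.eval z‖ =
      ∑ ζ ∈ p.roots.toFinset, (p.roots.count ζ : ℝ) * Real.log ‖z - ζ‖ := by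
  rw [(IsAlgClosed.splits p).eval_eq_prod_roots_of_monic hp, Finset.prod_multiset_map_count,
    norm_prod, Real.log_prod]
  · simp only [norm_pow, Real.log_pow]
  · intro ζ hζ
    refine norm_ne_zero_iff.2 (pow_ne_zero _ (sub_ne_zero.2 ?_))
    rintro rfl
    exact hz (Multiset.mem_toFinset.1 hζ)

theorem circleAverage_log_norm_eval_mul_im_sq {p : ℂ[X]} (hp : p.Monic)
    (hroots : ∀ ζ ∈ p.roots, ‖ζ‖ = 1) :
    Real.circleAverage (fun z => Real.log ‖p.eval z‖ * z.im ^ 2) 0 1 =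
      (p.roots.map fun ζ => (ζ ^ 2).re / 8).sum := by
  let f (ζ z : ℂ) : ℝ := Real.log ‖z - ζ‖ * z.im ^ 2
  have hf (ζ : ℂ) : CircleIntegrable (f ζ) 0 1 := by
    have hlog : CircleIntegrable (fun z => Real.log ‖z - ζ‖) 0 1 :=
      circleIntegrable_log_norm_sub_const 1
    exact hlog.mul_continuousOn (by fun_prop)
  have hsum : (fun z => Real.log ‖p.eval z‖ * z.im ^ 2) =ᶠ[Filter.codiscreteWithin
      (Metric.sphere 0 |1|)] fun z => ∑ ζ ∈ p.roots.toFinset, (p.roots.count ζ : ℝ) • f ζ z := by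
    filter_upwards [Filter.codiscreteWithin_mono (Set.subset_univ _)
      p.roots.toFinset.finite_toSet.compl_mem_codiscrete] with z hz
    rw [log_norm_eval_of_not_mem_roots hp (by simpa using hz), Finset.sum_mul]
    simp only [f, smul_eq_mul, mul_assoc]
  rw [Real.circleAverage_congr_codiscreteWithin hsum one_ne_zero,
    Real.circleAverage_fun_sum (f := fun ζ z => (p.roots.count ζ : ℝ) • f ζ z)
      fun ζ _ => (hf ζ).const_smul, Finset.sum_multiset_map_count]
  refine Finset.sum_congr rfl fun ζ hζ => ?_
  rw [Real.circleAverage_fun_smul, nsmul_eq_mul, smul_eq_mul,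
    circleAverage_log_norm_sub_mul_im_sq (hroots ζ (Multiset.mem_toFinset.1 hζ))]

theorem mahlerH_aeval_eq_sum_aroots_sq {p : ℝ[X]} (hp : p.Monic)
    (hroots : ∀ ζ ∈ p.aroots ℂ, ‖ζ‖ = 1) :
    mahlerH (fun q => aeval q p) = ((p.aroots ℂ).map fun ζ => (ζ ^ 2).re / 4).sum := by
  rw [mahlerH_aeval_eq_circleAverage]
  simp only [← eval_map_algebraMap]
  rw [circleAverage_log_norm_eval_mul_im_sq (hp.map _) hroots, ← Multiset.sum_map_mul_left]
  congr 2
  ext ζ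
  ring

theorem mahlerH_cyclotomic_eq_sum_primitiveRoots_sq {n : ℕ} (hn : n ≠ 0) :
    mahlerH (fun q => aeval q (cyclotomic n ℝ)) =
      (∑ ζ ∈ primitiveRoots n ℂ, ζ ^ 2).re / 4 := by
  have : NeZero (n : ℂ) := ⟨Nat.cast_ne_zero.2 hn⟩
  have hroots : (cyclotomic n ℝ).aroots ℂ = (primitiveRoots n ℂ).val := by
    rw [aroots_def, map_cyclotomic, cyclotomic.roots_eq_primitiveRoots_val]
  rw [mahlerH_aeval_eq_sum_aroots_sq (cyclotomic.monic n ℝ), hroots, Complex.re_sum,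
    Finset.sum_div]
  · rfl
  · intro ζ hζ
    rw [hroots] at hζ
    exact (isPrimitiveRoot_of_mem_primitiveRoots hζ).norm'_eq_one hn

end RootsOnUnitCircle

/-- the quaternionic Mahler measure of cyclotomic polynomials. -/
theorem mahlerH_cyclotomic (n : ℕ) (hn : 1 ≤ n) :
    (Odd n →
      mahlerH (fun q => Polynomial.aeval q (Polynomial.cyclotomic n ℝ)) =
        ((ArithmeticFunction.moebius n : ℤ) : ℝ) / 4) ∧
    (n % 4 = 2 →
      mahlerH (fun q => Polynomial.aeval q (Polynomial.cyclotomic n ℝ)) =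
        ((ArithmeticFunction.moebius (n / 2) : ℤ) : ℝ) / 4) ∧
    (4 ∣ n →
      mahlerH (fun q => Polynomial.aeval q (Polynomial.cyclotomic n ℝ)) =
        ((ArithmeticFunction.moebius (n / 2) : ℤ) : ℝ) / 2) := by
  have hn₀ : n ≠ 0 := Nat.one_le_iff_ne_zero.1 hn
  have hω := Complex.isPrimitiveRoot_exp n hn₀
  rw [mahlerH_cyclotomic_eq_sum_primitiveRoots_sq hn₀]
  have heven (h2 : 2 ∣ n) : (∑ ζ ∈ primitiveRoots n ℂ, ζ ^ 2).re =
      if Odd (n / 2) then (ArithmeticFunction.moebius (n / 2) : ℝ)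
      else 2 * ArithmeticFunction.moebius (n / 2) := by
    obtain ⟨m, rfl⟩ := h2
    rw [sum_primitiveRoots_sq_two_mul hω, Nat.mul_div_cancel_left m two_pos]
    split_ifs <;> simp
  refine ⟨fun hodd => ?_, fun hmod => ?_, fun hdvd => ?_⟩
  · rw [sum_primitiveRoots_sq_of_odd hω hodd, Complex.intCast_re]
  · rw [heven (by lia), if_pos (Nat.odd_iff.2 (by lia))]
  · rw [heven (by lia), if_neg (by rw [Nat.odd_iff]; lia)]
    ring
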